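/- (Lower bound via context richness.) Assume E_μ[ρ²·Rmax²] < ∞, let γ ∈ [0,1] and δ ∈ (0,1], set ξ(x,a) = 1(P_μ({(x,a)}) ≤ γ) and γ' = max{γ, δ}. Then there exist measurable functions R̂, ρ̂ : X×A → [0,∞) with R̂(x,a)² ≤ Rmax(x,a)² ≤ (1+δ)·R̂(x,a)² and ρ̂(x,a)² ≤ ρ(x,a)² ≤ (1+δ)·ρ̂(x,a)² for all (x,a), such that the minimax risk satisfies R_n ≥ ( E_μ[ξ·ρ̂²·R̂²] / (32·e·n) ) · ( 1 − E_μ[ ξ·ρ̂²·R̂² · 1( ξ·ρ̂·R̂ > √(n·E_μ[ξ·ρ̂²·R̂²]/16) ) ] / E_μ[ξ·ρ̂²·R̂²] )² − γ'·log(5/γ')·(1+δ)·E_μ[ξ·ρ̂²·R̂²]. -/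

import Mathlib

open MeasureTheory ProbabilityTheory Real
open scoped ENNReal BigOperators Classical

/-- A policy assigns to each context a probability mass function over actions. -/
structure Policy (X A : Type*) [MeasurableSpace X] [Fintype A] where
  prob : X → A → ℝ
  nonneg : ∀ x a, 0 ≤ prob x a
  sum_one : ∀ x, ∑ a, prob x a = 1
  meas : ∀ a, Measurable fun x => prob x a

variable {X A : Type*} [MeasurableSpace X] [Fintype A] [Nonempty A]
  [MeasurableSpace A] [MeasurableSingletonClass A]

/-- Importance weight ρ(x,a) = π(a|x)/μ(a|x). -/
noncomputable def impW (μp πp : Policy X A) (p : X × A) : ℝ :=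
  πp.prob p.1 p.2 / μp.prob p.1 p.2

/-- E_μ[f] : expectation of f(x,a) for x ∼ λ, a ∼ μ(·|x). -/
noncomputable def Emu (lam : Measure X) (μp : Policy X A) (f : X × A → ℝ) : ℝ :=
  ∫ x, ∑ a, μp.prob x a * f (x, a) ∂lam

/-- The distribution P_μ of (x,a) with x ∼ λ, a ∼ μ(·|x). -/
noncomputable def Policy.joint (lam : Measure X) (μp : Policy X A) : Measure (X × A) :=
  lam.bind fun x => Measure.sum fun a : A => ENNReal.ofReal (μp.prob x a) • Measure.dirac (x, a)

/-- Mean reward r*(x,a) of a reward kernel. -/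
noncomputable def rstar (D : Kernel (X × A) ℝ) (p : X × A) : ℝ := ∫ r, r ∂(D p)

/-- The value of the target policy π. -/
noncomputable def vpi (lam : Measure X) (πp : Policy X A) (D : Kernel (X × A) ℝ) : ℝ :=
  ∫ x, ∑ a, πp.prob x a * rstar D (x, a) ∂lam

/-- The joint distribution P_μ^D of ((x,a),r): x ∼ λ, a ∼ μ(·|x), r ∼ D(·|x,a). -/
noncomputable def sampleMeasure (lam : Measure X) (μp : Policy X A) (D : Kernel (X × A) ℝ) :
    Measure ((X × A) × ℝ) :=
  (Policy.joint lam μp).bind fun p => (D p).map fun r => (p, r)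

/-- The class R(σ,Rmax) of reward kernels: Markov kernels with finite second moments such
that P_μ-a.s. 0 ≤ r*(x,a) ≤ Rmax(x,a) and Var(r|x,a) ≤ σ(x,a)². -/
def InRewardClass (lam : Measure X) (μp : Policy X A) (σf Rmax : X × A → ℝ)
    (D : Kernel (X × A) ℝ) : Prop :=
  IsMarkovKernel D ∧ (∀ p, Integrable (fun r => r ^ 2) (D p)) ∧
    (∀ᵐ p ∂Policy.joint lam μp,
      0 ≤ rstar D p ∧ rstar D p ≤ Rmax p ∧ variance id (D p) ≤ σf p ^ 2)

/-- Minimax risk of off-policy evaluation from n i.i.d. samples. -/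
noncomputable def minimaxRisk (lam : Measure X) (μp πp : Policy X A)
    (σf Rmax : X × A → ℝ) (n : ℕ) : ℝ≥0∞ :=
  ⨅ (vhat : (Fin n → (X × A) × ℝ) → ℝ) (_ : Measurable vhat),
    ⨆ (D : Kernel (X × A) ℝ) (_ : InRewardClass lam μp σf Rmax D),
      ∫⁻ ω, ENNReal.ofReal ((vhat ω - vpi lam πp D) ^ 2)
        ∂(Measure.pi fun _ : Fin n => sampleMeasure lam μp D)

/-!
Cut the context-action space into finitely many measurable cells, choose a random union `B` of
cells, and let the reward be deterministically `ξ * Rmax` on `B` and `0` off `B`. The value of the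
target policy is then `∫ x in B, f x ∂P_μ` with `f = ξ * ρ * Rmax`. Consider two priors on `B` that
keep the cells independently with probabilities `(1 + h) / 2` and `(1 - h) / 2`, respectively. The
data only reveal the membership of the cells that the sampled points `p i` visit, so given these
points the squared Bhattacharyya coefficient of the two laws of the data is at least
`1 - ∑ i, h (p i) ^ 2`, and Le Cam's two-point method bounds the Bayes risk from below by means of
the separation `∫ f * h` of the two prior means of the value. What is lost in replacing the random
value by its mean is its variance, at most `¼ ∑ (∫ x in cell, f x ∂P_μ) ^ 2`; as the cells shrink to
points this tends to `¼ ∫ P_μ {x} * f x ^ 2 ∂P_μ ≤ γ / 4 * ∫ f ^ 2`, because `ξ` removes the atoms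
heavier than `γ`. Taking `h` proportional to `f` below the threshold, and `0` above it, gives the
bound.
-/

section Bhattacharyya

variable {K : Type*} [Fintype K] [MeasurableSpace K]

/-- The Bhattacharyya coefficient `∑ k, √(P k * Q k)` of two measures on a finite type, which
measures how hard they are to tell apart. -/
noncomputable def bhattacharyya (P Q : Measure K) : ℝ :=
  ∑ k, √(P.real {k}) * √(Q.real {k})

lemma bhattacharyya_self [MeasurableSingletonClass K] (P : Measure K) [IsProbabilityMeasure P] :
    bhattacharyya P P = 1 := by
  simp [bhattacharyya, Real.mul_self_sqrt measureReal_nonneg]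

-- Write `(b - a) √P √Q = √Q √P (ψ - a) + √P √Q (b - ψ)` and apply Cauchy–Schwarz to each part.
lemma sq_sub_mul_sq_bhattacharyya_le [MeasurableSingletonClass K] (P Q : Measure K)
    [IsProbabilityMeasure P] [IsProbabilityMeasure Q] (ψ : K → ℝ) (a b : ℝ) :
    (b - a) ^ 2 * bhattacharyya P Q ^ 2 ≤
      2 * (∫ k, (ψ k - a) ^ 2 ∂P + ∫ k, (ψ k - b) ^ 2 ∂Q) := by
  have sum_sq (ν : Measure K) [IsProbabilityMeasure ν] : ∑ k, √(ν.real {k}) ^ 2 = 1 := by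
    simp [Real.sq_sqrt measureReal_nonneg]
  have sum_sq_mul (ν : Measure K) [IsProbabilityMeasure ν] (c : ℝ) :
      ∑ k, (√(ν.real {k}) * (ψ k - c)) ^ 2 = ∫ k, (ψ k - c) ^ 2 ∂ν := by
    simp [integral_fintype .of_finite, mul_pow, Real.sq_sqrt measureReal_nonneg]
  have cauchy_P := Finset.sum_mul_sq_le_sq_mul_sq Finset.univ (fun k ↦ √(Q.real {k}))
    fun k ↦ √(P.real {k}) * (ψ k - a)
  have cauchy_Q := Finset.sum_mul_sq_le_sq_mul_sq Finset.univ (fun k ↦ √(P.real {k}))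
    fun k ↦ √(Q.real {k}) * (ψ k - b)
  rw [sum_sq, sum_sq_mul, one_mul] at cauchy_P cauchy_Q
  have split : (b - a) * bhattacharyya P Q = ∑ k, √(Q.real {k}) * (√(P.real {k}) * (ψ k - a)) -
      ∑ k, √(P.real {k}) * (√(Q.real {k}) * (ψ k - b)) := by
    rw [bhattacharyya, Finset.mul_sum, ← Finset.sum_sub_distrib]
    exact Finset.sum_congr rfl fun k _ ↦ by ring
  rw [← mul_pow, split]
  linarith [add_sq_le (a := ∑ k, √(Q.real {k}) * (√(P.real {k}) * (ψ k - a)))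
    (b := -∑ k, √(P.real {k}) * (√(Q.real {k}) * (ψ k - b)))]

lemma bhattacharyya_pi {J : Type*} [Fintype J] (P Q : J → Measure K)
    [∀ j, IsProbabilityMeasure (P j)] [∀ j, IsProbabilityMeasure (Q j)] :
    bhattacharyya (Measure.pi P) (Measure.pi Q) = ∏ j, bhattacharyya (P j) (Q j) := by
  have sqrt_prod (ν : J → Measure K) [∀ j, IsProbabilityMeasure (ν j)] (ω : J → K) :
      √((Measure.pi ν).real {ω}) = ∏ j, √((ν j).real {ω j}) := by
    rw [measureReal_def, Measure.pi_singleton, ENNReal.toReal_prod, Real.sqrt_eq_iff_mul_self_eq,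
      ← Finset.prod_mul_distrib]
    · simp [measureReal_def]
    · positivity
    · positivity
  simp [bhattacharyya, Finset.prod_univ_sum, sqrt_prod, Finset.prod_mul_distrib]

end Bhattacharyya

lemma one_sub_sum_le_prod_one_sub {ι : Type*} (S : Finset ι) (s : ι → ℝ)
    (hs : ∀ i ∈ S, s i ∈ Set.Icc 0 1) : 1 - ∑ i ∈ S, s i ≤ ∏ i ∈ S, (1 - s i) := by
  induction S using Finset.induction_on with
  | empty => simp
  | insert i S hi ih =>
    rw [Finset.forall_mem_insert] at hs
    obtain ⟨⟨h0, h1⟩, hS⟩ := hs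
    have sum_nonneg : 0 ≤ ∑ j ∈ S, s j := Finset.sum_nonneg fun j hj ↦ (hS j hj).1
    rw [Finset.sum_insert hi, Finset.prod_insert hi]
    nlinarith [mul_le_mul_of_nonneg_left (ih hS) (sub_nonneg.2 h1)]

lemma integral_pi_congr_of_dependsOn {J K : Type*} [Fintype J] [MeasurableSpace K]
    {μ μ' : J → Measure K} [∀ j, IsProbabilityMeasure (μ j)] [∀ j, IsProbabilityMeasure (μ' j)]
    {S : Finset J} (hμ : ∀ j ∈ S, μ j = μ' j) {φ : (J → K) → ℝ} (hφ : DependsOn φ S)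
    (hφm : Measurable φ) :
    ∫ ω, φ ω ∂(Measure.pi μ) = ∫ ω, φ ω ∂(Measure.pi μ') := by
  have restrict_eq : (fun j : S ↦ μ j) = fun j : S ↦ μ' j := funext fun j ↦ hμ j j.2
  obtain ⟨x⟩ := nonempty_of_isProbabilityMeasure (Measure.pi μ)
  let g : (S → K) → ℝ := fun y ↦ φ (Function.updateFinset x S y)
  have hg : Measurable g := hφm.comp measurable_updateFinset
  have factor (ω : J → K) : φ ω = g (S.restrict ω) :=
    hφ fun j hj ↦ by simp_all [Function.updateFinset]
  simp_rw [factor]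
  rw [← Measure.infinitePi_eq_pi, ← Measure.infinitePi_eq_pi,
    integral_restrict_infinitePi (μ := μ) hg.aestronglyMeasurable,
    integral_restrict_infinitePi (μ := μ') hg.aestronglyMeasurable, restrict_eq]

section CoinFlips

open unitInterval

variable {J : Type*} [Fintype J]

/-- Independent coin flips, the `j`-th of which comes up `true` with probability `q j`. -/
noncomputable def coinFlips (q : J → I) : Measure (J → Bool) :=
  Measure.pi fun j ↦ bernoulliMeasure true false (q j)

instance (q : J → I) : IsProbabilityMeasure (coinFlips q) := by
  unfold coinFlips
  infer_instance

lemma sq_bhattacharyya_bernoulliMeasure_symm (p : I) :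
    bhattacharyya (bernoulliMeasure true false p) (bernoulliMeasure true false (σ p)) ^ 2 =
      1 - (2 * p - 1) ^ 2 := by
  have heads (q : I) : (bernoulliMeasure true false q).real {true} = q := by
    simp
  have tails (q : I) : (bernoulliMeasure true false q).real {false} = 1 - q := by
    simp
  rw [bhattacharyya, Fintype.sum_bool, heads, heads, tails, tails, coe_symm_eq, sub_sub_cancel,
    mul_comm, ← two_mul, mul_pow, mul_pow, Real.sq_sqrt (sub_nonneg.2 p.2.2),
    Real.sq_sqrt p.2.1]
  ring

-- Off `S`, where `φ` does not look, the second prior may be replaced by the first.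
lemma sq_sub_mul_one_sub_sum_le_integral_coinFlips (q : J → I) (S : Finset J)
    {φ : (J → Bool) → ℝ} (hφ : DependsOn φ S) (a b : ℝ) :
    (b - a) ^ 2 * (1 - ∑ j ∈ S, (2 * q j - 1 : ℝ) ^ 2) ≤
      2 * (∫ ω, (φ ω - a) ^ 2 ∂coinFlips q + ∫ ω, (φ ω - b) ^ 2 ∂coinFlips (σ ∘ q)) := by
  let q' : J → I := S.piecewise (σ ∘ q) q
  have change_prior : ∫ ω, (φ ω - b) ^ 2 ∂coinFlips (σ ∘ q) = ∫ ω, (φ ω - b) ^ 2 ∂coinFlips q' :=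
    integral_pi_congr_of_dependsOn (S := S) (fun j hj ↦ by simp [q', hj])
      (fun ω ω' h ↦ by simp only [hφ h]) (measurable_of_finite _)
  have affinity (j : J) : bhattacharyya (bernoulliMeasure true false (q j))
      (bernoulliMeasure true false (q' j)) ^ 2 =
        if j ∈ S then 1 - (2 * q j - 1 : ℝ) ^ 2 else 1 := by
    by_cases hj : j ∈ S
    · simp [q', hj, sq_bhattacharyya_bernoulliMeasure_symm]
    · simp [q', hj, bhattacharyya_self]
  have affinity_prod : 1 - ∑ j ∈ S, (2 * q j - 1 : ℝ) ^ 2 ≤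
      bhattacharyya (coinFlips q) (coinFlips q') ^ 2 := by
    rw [coinFlips, coinFlips, bhattacharyya_pi, ← Finset.prod_pow]
    simp only [affinity, Finset.prod_ite_mem, Finset.univ_inter]
    refine one_sub_sum_le_prod_one_sub S _ fun j _ ↦ ⟨sq_nonneg _, ?_⟩
    nlinarith [(q j).2.1, (q j).2.2]
  rw [change_prior]
  exact (mul_le_mul_of_nonneg_left affinity_prod (sq_nonneg _)).trans
    (sq_sub_mul_sq_bhattacharyya_le _ _ _ _ _)

lemma integral_coinFlips_sum_ite (q : J → I) (a : J → ℝ) :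
    ∫ ω, ∑ j, (if ω j then a j else 0) ∂coinFlips q = ∑ j, a j * q j := by
  rw [integral_finsetSum _ fun _ _ ↦ .of_finite]
  refine Finset.sum_congr rfl fun j _ ↦ ?_
  calc ∫ ω, (if ω j then a j else 0) ∂coinFlips q
      = ∫ b, (if b then a j else 0) ∂bernoulliMeasure true false (q j) :=
        integral_comp_eval (μ := fun j ↦ bernoulliMeasure true false (q j)) (i := j)
          (f := fun b : Bool ↦ if b then a j else 0) (measurable_of_finite _).aestronglyMeasurable
    _ = a j * q j := by simp [integral_bernoulliMeasure, mul_comm]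

lemma variance_coinFlips_sum_ite_le (q : J → I) (a : J → ℝ) :
    Var[fun ω ↦ ∑ j, (if ω j then a j else 0); coinFlips q] ≤ (∑ j, a j ^ 2) / 4 := by
  have var_le (j : J) : Var[fun b : Bool ↦ if b then a j else 0; bernoulliMeasure true false (q j)]
      ≤ a j ^ 2 / 4 := by
    rw [variance_eq_sub .of_discrete]
    simp only [integral_bernoulliMeasure, Pi.pow_apply, if_true, Bool.false_eq_true, if_false,
      smul_eq_mul]
    nlinarith [sq_nonneg (a j * (2 * q j - 1))]
  calc Var[fun ω ↦ ∑ j, (if ω j then a j else 0); coinFlips q]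
      = Var[∑ j, fun ω : J → Bool ↦ if ω j then a j else 0; coinFlips q] := by
        congr 1
        funext ω
        simp
    _ = ∑ j, Var[fun b : Bool ↦ if b then a j else 0; bernoulliMeasure true false (q j)] :=
        variance_sum_pi (μ := fun j ↦ bernoulliMeasure true false (q j))
          (X := fun j (b : Bool) ↦ if b then a j else 0) fun _ ↦ .of_discrete
    _ ≤ (∑ j, a j ^ 2) / 4 := by
        rw [Finset.sum_div]
        exact Finset.sum_le_sum fun j _ ↦ var_le j

lemma half_integral_sq_sub_mean_le {Ω : Type*} [MeasurableSpace Ω] {P : Measure Ω}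
    [IsFiniteMeasure P] {φ θ : Ω → ℝ} (hφ : MemLp φ 2 P) (hθ : MemLp θ 2 P) :
    (∫ ω, (φ ω - ∫ ω', θ ω' ∂P) ^ 2 ∂P) / 2 ≤ ∫ ω, (φ ω - θ ω) ^ 2 ∂P + Var[θ; P] := by
  set m := ∫ ω', θ ω' ∂P
  have hφθ : Integrable (fun ω ↦ (φ ω - θ ω) ^ 2) P := (hφ.sub hθ).integrable_sq
  have hθm : Integrable (fun ω ↦ (θ ω - m) ^ 2) P := (hθ.sub (memLp_const m)).integrable_sq
  rw [variance_eq_integral hθ.aemeasurable, ← integral_add hφθ hθm, ← integral_div]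
  refine integral_mono (((hφ.sub (memLp_const m)).integrable_sq).div_const 2) (hφθ.add hθm)
    fun ω ↦ ?_
  have parallelogram := add_sq_le (a := φ ω - θ ω) (b := θ ω - m)
  rw [sub_add_sub_cancel] at parallelogram
  exact (div_le_iff₀' two_pos).2 parallelogram

lemma le_sum_coinFlips_sq_loss (q : J → I) (a : J → ℝ) (S : Finset J) {φ : (J → Bool) → ℝ}
    (hφ : DependsOn φ S) :
    (∑ j, a j * (2 * q j - 1)) ^ 2 / 4 * (1 - ∑ j ∈ S, (2 * q j - 1 : ℝ) ^ 2) -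
        (∑ j, a j ^ 2) / 2 ≤
      ∫ ω, (φ ω - ∑ j, if ω j then a j else 0) ^ 2 ∂coinFlips q +
        ∫ ω, (φ ω - ∑ j, if ω j then a j else 0) ^ 2 ∂coinFlips (σ ∘ q) := by
  have prior_loss (q' : J → I) : (∫ ω, (φ ω - ∑ j, a j * q' j) ^ 2 ∂coinFlips q') / 2 ≤
      ∫ ω, (φ ω - ∑ j, if ω j then a j else 0) ^ 2 ∂coinFlips q' + (∑ j, a j ^ 2) / 4 := by
    rw [← integral_coinFlips_sum_ite]
    exact (half_integral_sq_sub_mean_le .of_discrete .of_discrete).trans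
      (add_le_add_right (variance_coinFlips_sum_ite_le q' a) _)
  have two_point := sq_sub_mul_one_sub_sum_le_integral_coinFlips q S hφ (∑ j, a j * q j)
    (∑ j, a j * (σ ∘ q) j)
  have separation : ∑ j, a j * ((σ ∘ q) j : ℝ) - ∑ j, a j * (q j : ℝ) =
      -∑ j, a j * (2 * q j - 1 : ℝ) := by
    rw [← Finset.sum_sub_distrib, ← Finset.sum_neg_distrib]
    exact Finset.sum_congr rfl fun j _ ↦ by simp; ring
  rw [separation, neg_sq] at two_point
  linarith [prior_loss q, prior_loss (σ ∘ q)]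

end CoinFlips

lemma ofReal_integral_le_lintegral_ofReal {Ω : Type*} [MeasurableSpace Ω] (P : Measure Ω)
    (g : Ω → ℝ) : ENNReal.ofReal (∫ x, g x ∂P) ≤ ∫⁻ x, ENNReal.ofReal (g x) ∂P := by
  by_cases hg : Integrable g P
  · rw [integral_eq_lintegral_pos_part_sub_lintegral_neg_part hg]
    exact ENNReal.ofReal_le_of_le_toReal (sub_le_self _ ENNReal.toReal_nonneg)
  · simp [integral_undef hg]

lemma integral_pi_sum_comp_eval {ι P : Type*} [Fintype ι] [MeasurableSpace P] {ν : Measure P}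
    [IsProbabilityMeasure ν] {g : P → ℝ} (hg : Integrable g ν) :
    ∫ p, ∑ i, g (p i) ∂(Measure.pi fun _ : ι ↦ ν) = Fintype.card ι * ∫ p, g p ∂ν := by
  rw [integral_finsetSum _ fun i _ ↦ integrable_comp_eval (μ := fun _ : ι ↦ ν) (i := i) hg]
  simp [integral_comp_eval (μ := fun _ : ι ↦ ν) hg.aestronglyMeasurable]

lemma integral_one_sub_sum_comp_eval {P : Type*} [MeasurableSpace P] {ν : Measure P}
    [IsProbabilityMeasure ν] {n : ℕ} {g : P → ℝ} (hg : Integrable g ν) (a b : ℝ) :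
    ∫ p, (a * (1 - ∑ i, g (p i)) - b) ∂(Measure.pi fun _ : Fin n ↦ ν) =
      a * (1 - n * ∫ x, g x ∂ν) - b := by
  have sum_integrable : Integrable (fun p : Fin n → P ↦ ∑ i, g (p i)) (Measure.pi fun _ ↦ ν) :=
    integrable_finsetSum _ fun i _ ↦ integrable_comp_eval (μ := fun _ : Fin n ↦ ν) (i := i) hg
  have diff_integrable := (integrable_const (1 : ℝ)).sub sum_integrable
  simp only [Pi.sub_def] at diff_integrable
  rw [integral_sub (diff_integrable.const_mul _) (integrable_const _), integral_const_mul,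
    integral_sub (integrable_const _) sum_integrable, integral_pi_sum_comp_eval hg]
  simp

lemma integral_mul_comp_eq_sum_setIntegral {P J : Type*} [MeasurableSpace P] [Fintype J]
    [MeasurableSpace J] [MeasurableSingletonClass J] {ν : Measure P} {f : P → ℝ}
    (hf : Integrable f ν) {c : P → J} (hc : Measurable c) (h : J → ℝ) :
    ∫ p, f p * h (c p) ∂ν = ∑ j, (∫ p in c ⁻¹' {j}, f p ∂ν) * h j := by
  have fiber (j : J) : MeasurableSet (c ⁻¹' {j}) := hc (measurableSet_singleton j)
  have split (p : P) : f p * h (c p) = ∑ j, (c ⁻¹' {j}).indicator f p * h j := by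
    rw [Finset.sum_eq_single (c p) (fun j _ hj ↦ by simp [hj.symm]) (by simp)]
    simp
  simp_rw [split]
  rw [integral_finsetSum _ fun j _ ↦ (hf.indicator (fiber j)).mul_const _]
  simp_rw [integral_mul_const, integral_indicator (fiber _)]

section SubsetRisk

open unitInterval

variable {P : Type*} [MeasurableSpace P]

/-- The squared error of `v̂` as an estimate of `∫ x in B, f x ∂ν` when each sampled point `p i` is
observed along with the reward `r (p i)` if `p i ∈ B` and `0` otherwise. -/
noncomputable def subsetLoss (ν : Measure P) (f r : P → ℝ) {n : ℕ}
    (vhat : (Fin n → P × ℝ) → ℝ) (B : Set P) (p : Fin n → P) : ℝ :=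
  (vhat (fun i ↦ (p i, B.indicator r (p i))) - ∫ x in B, f x ∂ν) ^ 2

/-- The worst-case mean of `subsetLoss` over the measurable sets `B`, for `n` independent points
drawn from `ν`. -/
noncomputable def subsetRisk (ν : Measure P) (f r : P → ℝ) {n : ℕ}
    (vhat : (Fin n → P × ℝ) → ℝ) : ℝ≥0∞ :=
  ⨆ (B : Set P) (_ : MeasurableSet B),
    ∫⁻ p, ENNReal.ofReal (subsetLoss ν f r vhat B p) ∂(Measure.pi fun _ ↦ ν)

lemma measurable_subsetLoss (ν : Measure P) (f : P → ℝ) {r : P → ℝ} (hr : Measurable r) {n : ℕ}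
    {vhat : (Fin n → P × ℝ) → ℝ} (hv : Measurable vhat) {B : Set P} (hB : MeasurableSet B) :
    Measurable (subsetLoss ν f r vhat B) := by
  have observations : Measurable fun (p : Fin n → P) i ↦ (p i, B.indicator r (p i)) :=
    measurable_pi_lambda _ fun i ↦
      (measurable_pi_apply i).prodMk ((hr.indicator hB).comp (measurable_pi_apply i))
  exact ((hv.comp observations).sub_const _).pow_const 2

lemma lintegral_ofReal_integral_subsetLoss_le {Ω : Type*} [Finite Ω] [MeasurableSpace Ω]
    [MeasurableSingletonClass Ω] (prior : Measure Ω) [IsProbabilityMeasure prior]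
    (ν : Measure P) [IsProbabilityMeasure ν] (f : P → ℝ) {r : P → ℝ} (hr : Measurable r) {n : ℕ}
    {vhat : (Fin n → P × ℝ) → ℝ} (hv : Measurable vhat) {B : Ω → Set P}
    (hB : ∀ ω, MeasurableSet (B ω)) :
    ∫⁻ p, ENNReal.ofReal (∫ ω, subsetLoss ν f r vhat (B ω) p ∂prior) ∂(Measure.pi fun _ ↦ ν) ≤
      subsetRisk ν f r vhat := by
  have loss_meas (ω : Ω) : Measurable fun p ↦ ENNReal.ofReal (subsetLoss ν f r vhat (B ω) p) :=
    (measurable_subsetLoss ν f hr hv (hB ω)).ennreal_ofReal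
  calc ∫⁻ p, ENNReal.ofReal (∫ ω, subsetLoss ν f r vhat (B ω) p ∂prior) ∂(Measure.pi fun _ ↦ ν)
      = ∫⁻ p, ∫⁻ ω, ENNReal.ofReal (subsetLoss ν f r vhat (B ω) p) ∂prior
          ∂(Measure.pi fun _ ↦ ν) :=
        lintegral_congr fun p ↦
          ofReal_integral_eq_lintegral_ofReal .of_finite (.of_forall fun ω ↦ sq_nonneg _)
    _ = ∫⁻ ω, ∫⁻ p, ENNReal.ofReal (subsetLoss ν f r vhat (B ω) p) ∂(Measure.pi fun _ ↦ ν)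
          ∂prior :=
        lintegral_lintegral_swap (measurable_from_prod_countable_left loss_meas).aemeasurable
    _ ≤ ∫⁻ _, subsetRisk ν f r vhat ∂prior :=
        lintegral_mono fun ω ↦ le_iSup₂_of_le (B ω) (hB ω) le_rfl
    _ = subsetRisk ν f r vhat := by simp

variable {ν : Measure P} {f r : P → ℝ} {n : ℕ} {vhat : (Fin n → P × ℝ) → ℝ}

lemma ofReal_integral_le_two_mul_subsetRisk [IsProbabilityMeasure ν] {Ω : Type*} [Finite Ω]
    [MeasurableSpace Ω] [MeasurableSingletonClass Ω] (prior prior' : Measure Ω)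
    [IsProbabilityMeasure prior] [IsProbabilityMeasure prior'] (hr : Measurable r)
    (hv : Measurable vhat) {B : Ω → Set P} (hB : ∀ ω, MeasurableSet (B ω)) {G : (Fin n → P) → ℝ}
    (hG : ∀ p, G p ≤ ∫ ω, subsetLoss ν f r vhat (B ω) p ∂prior +
      ∫ ω, subsetLoss ν f r vhat (B ω) p ∂prior') :
    ENNReal.ofReal (∫ p, G p ∂(Measure.pi fun _ ↦ ν)) ≤ 2 * subsetRisk ν f r vhat := by
  have := Fintype.ofFinite Ω
  have mean_loss_measurable :
      Measurable fun p ↦ ENNReal.ofReal (∫ ω, subsetLoss ν f r vhat (B ω) p ∂prior) := by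
    simp only [integral_fintype .of_finite, smul_eq_mul]
    exact (Finset.measurable_sum _ fun ω _ ↦
      (measurable_subsetLoss ν f hr hv (hB ω)).const_mul _).ennreal_ofReal
  calc ENNReal.ofReal (∫ p, G p ∂(Measure.pi fun _ ↦ ν))
      ≤ ∫⁻ p, ENNReal.ofReal (G p) ∂(Measure.pi fun _ ↦ ν) :=
        ofReal_integral_le_lintegral_ofReal _ _
    _ ≤ ∫⁻ p, (ENNReal.ofReal (∫ ω, subsetLoss ν f r vhat (B ω) p ∂prior) +
          ENNReal.ofReal (∫ ω, subsetLoss ν f r vhat (B ω) p ∂prior')) ∂(Measure.pi fun _ ↦ ν) :=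
        lintegral_mono fun p ↦ (ENNReal.ofReal_le_ofReal (hG p)).trans ENNReal.ofReal_add_le
    _ ≤ subsetRisk ν f r vhat + subsetRisk ν f r vhat :=
        (lintegral_add_left mean_loss_measurable _).trans_le (add_le_add
          (lintegral_ofReal_integral_subsetLoss_le prior ν f hr hv hB)
          (lintegral_ofReal_integral_subsetLoss_le prior' ν f hr hv hB))
    _ = 2 * subsetRisk ν f r vhat := (two_mul _).symm

section Cells

variable {J : Type*} [Fintype J] [MeasurableSpace J] [MeasurableSingletonClass J]

lemma le_sum_coinFlips_subsetLoss (hf : Integrable f ν) {c : P → J} (hc : Measurable c)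
    (q : J → I) (p : Fin n → P) :
    (∫ x, f x * (2 * q (c x) - 1) ∂ν) ^ 2 / 4 * (1 - ∑ i, (2 * q (c (p i)) - 1 : ℝ) ^ 2) -
        (∑ j, (∫ x in c ⁻¹' {j}, f x ∂ν) ^ 2) / 2 ≤
      ∫ ω, subsetLoss ν f r vhat (c ⁻¹' {j | ω j = true}) p ∂coinFlips q +
        ∫ ω, subsetLoss ν f r vhat (c ⁻¹' {j | ω j = true}) p ∂coinFlips (σ ∘ q) := by
  let φ (ω : J → Bool) : ℝ := vhat fun i ↦ (p i, (c ⁻¹' {j | ω j = true}).indicator r (p i))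
  have estimate_dependsOn : DependsOn φ (Finset.univ.image (c ∘ p) : Finset J) := by
    intro ω ω' h
    have agree (i : Fin n) : ω (c (p i)) = ω' (c (p i)) := h _ (by simp)
    have observation_eq (i : Fin n) : (c ⁻¹' {j | ω j = true}).indicator r (p i) =
        (c ⁻¹' {j | ω' j = true}).indicator r (p i) := by
      by_cases h : ω' (c (p i)) = true <;> simp [agree, h]
    simp only [φ, observation_eq]
  have value_eq (ω : J → Bool) : ∫ x in c ⁻¹' {j | ω j = true}, f x ∂ν =
      ∑ j, if ω j then ∫ x in c ⁻¹' {j}, f x ∂ν else 0 := by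
    have := integral_mul_comp_eq_sum_setIntegral hf hc fun j ↦ if ω j then 1 else 0
    simp only [mul_ite, mul_one, mul_zero] at this
    rw [← this, ← integral_indicator (hc (Set.toFinite _).measurableSet)]
    refine integral_congr_ae (.of_forall fun x ↦ ?_)
    by_cases h : ω (c x) = true <;> simp [h]
  have observed_le := Finset.sum_image_le_of_nonneg (s := Finset.univ) (g := c ∘ p)
    (f := fun j ↦ (2 * q j - 1 : ℝ) ^ 2) fun j _ ↦ sq_nonneg _
  have bayes := le_sum_coinFlips_sq_loss q (fun j ↦ ∫ x in c ⁻¹' {j}, f x ∂ν) _ estimate_dependsOn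
  simp only [← value_eq, ← integral_mul_comp_eq_sum_setIntegral hf hc] at bayes
  refine le_trans ?_ bayes
  gcongr
  exact observed_le

lemma ofReal_le_subsetRisk_of_cells [IsProbabilityMeasure ν] (hf : Integrable f ν)
    (hr : Measurable r) (hv : Measurable vhat) {c : P → J} (hc : Measurable c) (q : J → I) :
    ENNReal.ofReal ((∫ x, f x * (2 * q (c x) - 1) ∂ν) ^ 2 / 8 *
        (1 - n * ∫ x, (2 * q (c x) - 1 : ℝ) ^ 2 ∂ν) -
          (∑ j, (∫ x in c ⁻¹' {j}, f x ∂ν) ^ 2) / 4) ≤ subsetRisk ν f r vhat := by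
  have tilt_sq_integrable : Integrable (fun x ↦ (2 * q (c x) - 1 : ℝ) ^ 2) ν := by
    refine .of_bound ((measurable_of_finite fun j ↦ (2 * q j - 1 : ℝ) ^ 2).comp hc
      |>.aestronglyMeasurable) 1 (.of_forall fun x ↦ ?_)
    rw [Real.norm_of_nonneg (sq_nonneg _)]
    nlinarith [(q (c x)).2.1, (q (c x)).2.2]
  have two_priors := ofReal_integral_le_two_mul_subsetRisk (coinFlips q) (coinFlips (σ ∘ q)) hr hv
    (fun ω ↦ hc (Set.toFinite {j | ω j = true}).measurableSet)
    (le_sum_coinFlips_subsetLoss (r := r) (vhat := vhat) hf hc q)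
  rw [integral_one_sub_sum_comp_eval tilt_sq_integrable] at two_priors
  refine le_trans (le_of_eq ?_) (ENNReal.div_le_of_le_mul' two_priors)
  rw [← ENNReal.ofReal_ofNat, ← ENNReal.ofReal_div_of_pos two_pos]
  congr 1
  ring

end Cells

end SubsetRisk

section SmallAtoms

variable {P : Type*} [MeasurableSpace P] {ν : Measure P} {f : P → ℝ}

lemma sum_sq_setIntegral_fiber [SFinite ν] {J : Type*} [Fintype J] [MeasurableSpace J]
    [MeasurableSingletonClass J] (hf : Integrable f ν) {c : P → J} (hc : Measurable c) :
    ∑ j, (∫ x in c ⁻¹' {j}, f x ∂ν) ^ 2 =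
      ∫ z in {z | c z.1 = c z.2}, f z.1 * f z.2 ∂ν.prod ν := by
  have fiber (j : J) : MeasurableSet (c ⁻¹' {j}) := hc (measurableSet_singleton j)
  have same_cell : {z : P × P | c z.1 = c z.2} = ⋃ j, (c ⁻¹' {j}) ×ˢ (c ⁻¹' {j}) := by
    ext z
    simp [eq_comm]
  rw [same_cell, integral_iUnion_fintype (fun j ↦ (fiber j).prod (fiber j))
    (fun i j hij ↦ Set.disjoint_prod.2 (.inl (.preimage c (by simpa using hij))))
    (fun _ ↦ (hf.mul_prod hf).integrableOn)]
  simp_rw [setIntegral_prod_mul, sq]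

lemma setIntegral_diagonal_prod [SFinite ν] [MeasurableSingletonClass P]
    (hdiag : MeasurableSet (Set.diagonal P)) (hf : Integrable f ν) :
    ∫ z in Set.diagonal P, f z.1 * f z.2 ∂ν.prod ν = ∫ x, ν.real {x} * f x ^ 2 ∂ν := by
  have slice (x y : P) : (Set.diagonal P).indicator (fun z ↦ f z.1 * f z.2) (x, y) =
      ({x} : Set P).indicator (fun y ↦ f x * f y) y := by
    by_cases h : x = y <;> simp [h, eq_comm (a := y)]
  rw [← integral_indicator hdiag, integral_prod _ ((hf.mul_prod hf).indicator hdiag)]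
  simp_rw [slice, integral_indicator (measurableSet_singleton _), integral_singleton, smul_eq_mul,
    sq]

/-- The cell of `p` in the partition of `P` generated by the first `k` coordinates of `b` together
with `s`. -/
def cell {J : Type*} (b : P → ℕ → Bool) (s : P → J) (k : ℕ) (p : P) : (Fin k → Bool) × J :=
  (fun i ↦ b p i, s p)

variable {J : Type*} [MeasurableSpace J] {b : P → ℕ → Bool} {s : P → J}

lemma measurable_cell (hb : Measurable b) (hs : Measurable s) (k : ℕ) :
    Measurable (cell b s k) :=
  .prodMk (measurable_pi_lambda _ fun i ↦ (measurable_pi_iff.1 hb) i) hs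

lemma tendsto_sum_sq_setIntegral_cell [SFinite ν] [MeasurableSingletonClass P] [Fintype J]
    [MeasurableSingletonClass J] (hf : Integrable f ν) (hb : Measurable b)
    (hinj : Function.Injective b) (hs : Measurable s) :
    Filter.Tendsto (fun k ↦ ∑ j, (∫ x in cell b s k ⁻¹' {j}, f x ∂ν) ^ 2) Filter.atTop
      (nhds (∫ x, ν.real {x} * f x ^ 2 ∂ν)) := by
  let agree (k : ℕ) : Set (P × P) := {z | cell b s k z.1 = cell b s k z.2}
  have agree_measurable (k : ℕ) : MeasurableSet (agree k) :=
    measurableSet_eq_fun ((measurable_cell hb hs k).comp measurable_fst)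
      ((measurable_cell hb hs k).comp measurable_snd)
  have agree_antitone : Antitone agree := fun k l hkl z hz ↦ by
    simp only [agree, cell, Set.mem_ofPred_eq, Prod.mk.injEq, funext_iff] at hz ⊢
    exact ⟨fun i ↦ hz.1 (Fin.castLE hkl i), hz.2⟩
  have iInter_agree : ⋂ k, agree k = Set.diagonal P := by
    ext ⟨x, y⟩
    simp only [agree, cell, Set.mem_iInter, Set.mem_ofPred_eq, Set.mem_diagonal_iff]
    refine ⟨fun h ↦ hinj (funext fun i ↦ ?_), fun h k ↦ by rw [h]⟩
    exact congr_fun (Prod.ext_iff.1 (h (i + 1))).1 (Fin.last i)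
  simp_rw [sum_sq_setIntegral_fiber hf (measurable_cell hb hs _)]
  rw [← setIntegral_diagonal_prod (iInter_agree ▸ .iInter agree_measurable) hf, ← iInter_agree]
  exact tendsto_setIntegral_of_antitone agree_measurable agree_antitone
    ⟨0, (hf.mul_prod hf).integrableOn⟩

lemma integral_singleton_mul_sq_le {γ : ℝ} (hf : Integrable (fun x ↦ f x ^ 2) ν)
    (hatom : ∀ x, f x ≠ 0 → ν.real {x} ≤ γ) :
    ∫ x, ν.real {x} * f x ^ 2 ∂ν ≤ γ * ∫ x, f x ^ 2 ∂ν := by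
  rw [← integral_const_mul]
  refine integral_mono_of_nonneg (.of_forall fun x ↦ by positivity) (hf.const_mul γ)
    (.of_forall fun x ↦ ?_)
  by_cases hx : f x = 0
  · simp [hx]
  · exact mul_le_mul_of_nonneg_right (hatom x hx) (sq_nonneg _)

end SmallAtoms

lemma integral_ite_zero_left {P : Type*} [MeasurableSpace P] {ν : Measure P} {g : P → ℝ}
    (hg : Integrable g ν) {p : P → Prop} (hp : MeasurableSet {x | p x}) :
    ∫ x, (if p x then 0 else g x) ∂ν = ∫ x, g x ∂ν - ∫ x, (if p x then g x else 0) ∂ν := by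
  have pos : ∫ x, (if p x then g x else 0) ∂ν = ∫ x in {x | p x}, g x ∂ν := by
    rw [← integral_indicator hp]
    rfl
  have neg : ∫ x, (if p x then 0 else g x) ∂ν = ∫ x in {x | p x}ᶜ, g x ∂ν := by
    rw [← integral_indicator hp.compl]
    congr with x
    by_cases hx : p x <;> simp [hx]
  rw [pos, neg, ← integral_add_compl hp hg, add_sub_cancel_left]

lemma div_mul_one_sub_div_sq_le {V W : ℝ} (hV : 0 ≤ V) (hW : 0 ≤ W) (n : ℕ) :
    V / (32 * n) * (1 - W / V) ^ 2 ≤ ((√(2 * n * V))⁻¹ * (V - W)) ^ 2 / 8 *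
      (1 - n * ((√(2 * n * V))⁻¹ ^ 2 * (V - W))) := by
  rw [mul_pow, inv_pow, Real.sq_sqrt (by positivity)]
  rcases n.eq_zero_or_pos with rfl | hn
  · simp
  rcases hV.eq_or_lt with rfl | hV
  · simp
  have information_le : n * ((2 * n * V)⁻¹ * (V - W)) ≤ 1 / 2 := by
    field_simp
    linarith
  calc V / (32 * n) * (1 - W / V) ^ 2
      = (2 * n * V)⁻¹ * (V - W) ^ 2 / 8 * (1 / 2) := by
        field_simp
        ring
    _ ≤ _ := by
        gcongr
        linarith

section Tilt

open unitInterval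

variable {P : Type*} [MeasurableSpace P] [MeasurableSpace.CountablySeparated P] {ν : Measure P}
  [IsProbabilityMeasure ν] {f r : P → ℝ} {n : ℕ} {vhat : (Fin n → P × ℝ) → ℝ}

lemma ofReal_le_subsetRisk_of_simpleFunc (hf : Integrable f ν) (hr : Measurable r)
    (hv : Measurable vhat) (s : SimpleFunc P I) :
    ENNReal.ofReal ((∫ x, f x * (2 * s x - 1) ∂ν) ^ 2 / 8 *
        (1 - n * ∫ x, (2 * s x - 1 : ℝ) ^ 2 ∂ν) - (∫ x, ν.real {x} * f x ^ 2 ∂ν) / 4) ≤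
      subsetRisk ν f r vhat := by
  obtain ⟨b, hb, hinj⟩ := MeasurableSpace.measurable_injection_nat_bool_of_countablySeparated P
  have := MeasurableSpace.measurableSingletonClass_of_countablySeparated (α := P)
  let label (p : P) : s.range := ⟨s p, s.mem_range_self p⟩
  have label_measurable : Measurable label := s.measurable.subtype_mk
  refine le_of_tendsto' (ENNReal.tendsto_ofReal (((tendsto_sum_sq_setIntegral_cell hf hb hinj
    label_measurable).div_const 4).const_sub _)) fun k ↦ ?_
  exact ofReal_le_subsetRisk_of_cells hf hr hv (measurable_cell hb label_measurable k)
    fun j ↦ (j.2 : I)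

lemma ofReal_le_subsetRisk_of_unitInterval (hf : Integrable f ν) (hr : Measurable r)
    (hv : Measurable vhat) {u : P → I} (hu : Measurable u) :
    ENNReal.ofReal ((∫ x, f x * (2 * u x - 1) ∂ν) ^ 2 / 8 *
        (1 - n * ∫ x, (2 * u x - 1 : ℝ) ^ 2 ∂ν) - (∫ x, ν.real {x} * f x ^ 2 ∂ν) / 4) ≤
      subsetRisk ν f r vhat := by
  let s := hu.stronglyMeasurable.approx
  let tilt (v : I) : ℝ := 2 * v - 1
  have tilt_continuous : Continuous tilt := by fun_prop
  have abs_tilt_le (v : I) : |tilt v| ≤ 1 :=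
    abs_le.2 ⟨by simp only [tilt]; linarith [v.2.1], by simp only [tilt]; linarith [v.2.2]⟩
  have tilt_measurable (k : ℕ) : Measurable fun x ↦ tilt (s k x) :=
    tilt_continuous.measurable.comp (s k).measurable
  have tilt_tendsto (x : P) :
      Filter.Tendsto (fun k ↦ tilt (s k x)) Filter.atTop (nhds (tilt (u x))) :=
    (tilt_continuous.tendsto _).comp (hu.stronglyMeasurable.tendsto_approx x)
  have separation : Filter.Tendsto (fun k ↦ ∫ x, f x * tilt (s k x) ∂ν) Filter.atTop
      (nhds (∫ x, f x * tilt (u x) ∂ν)) := by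
    refine tendsto_integral_of_dominated_convergence (fun x ↦ |f x|)
      (fun k ↦ hf.aestronglyMeasurable.mul (tilt_measurable k).aestronglyMeasurable) hf.abs
      (fun k ↦ .of_forall fun x ↦ ?_) (.of_forall fun x ↦ (tilt_tendsto x).const_mul _)
    rw [Real.norm_eq_abs, abs_mul]
    exact mul_le_of_le_one_right (abs_nonneg _) (abs_tilt_le _)
  have information : Filter.Tendsto (fun k ↦ ∫ x, tilt (s k x) ^ 2 ∂ν) Filter.atTop
      (nhds (∫ x, tilt (u x) ^ 2 ∂ν)) := by
    refine tendsto_integral_of_dominated_convergence (fun _ ↦ 1)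
      (fun k ↦ ((tilt_measurable k).pow_const 2).aestronglyMeasurable) (integrable_const 1)
      (fun k ↦ .of_forall fun x ↦ ?_) (.of_forall fun x ↦ (tilt_tendsto x).pow 2)
    rw [norm_pow, Real.norm_eq_abs]
    exact pow_le_one₀ (abs_nonneg _) (abs_tilt_le _)
  exact le_of_tendsto' (ENNReal.tendsto_ofReal ((((separation.pow 2).div_const 8).mul
    ((information.const_mul _).const_sub 1)).sub_const _)) fun k ↦
      ofReal_le_subsetRisk_of_simpleFunc hf hr hv (s k)

lemma ofReal_le_subsetRisk (hf : Integrable f ν) (hr : Measurable r) (hv : Measurable vhat)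
    {h : P → ℝ} (hh : Measurable h) (hh_le : ∀ x, |h x| ≤ 1) :
    ENNReal.ofReal ((∫ x, f x * h x ∂ν) ^ 2 / 8 * (1 - n * ∫ x, h x ^ 2 ∂ν) -
        (∫ x, ν.real {x} * f x ^ 2 ∂ν) / 4) ≤ subsetRisk ν f r vhat := by
  let u (x : P) : I := ⟨(1 + h x) / 2, by linarith [abs_le.1 (hh_le x)],
    by linarith [abs_le.1 (hh_le x)]⟩
  have hu : Measurable u := ((hh.const_add 1).div_const 2).subtype_mk
  have tilt_eq (x : P) : (2 * u x - 1 : ℝ) = h x := by simp only [u]; ring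
  simpa only [tilt_eq] using ofReal_le_subsetRisk_of_unitInterval hf hr hv hu

lemma ofReal_le_subsetRisk_of_threshold (hf : Measurable f) (hf0 : ∀ x, 0 ≤ f x)
    (hf2 : Integrable (fun x ↦ f x ^ 2) ν) {γ : ℝ} (hatom : ∀ x, f x ≠ 0 → ν.real {x} ≤ γ)
    (hr : Measurable r) (hv : Measurable vhat) {τ : ℝ} (hτ : τ ≤ √(2 * n * ∫ x, f x ^ 2 ∂ν)) :
    ENNReal.ofReal ((∫ x, f x ^ 2 ∂ν) / (32 * n) *
        (1 - (∫ x, (if τ < f x then f x ^ 2 else 0) ∂ν) / ∫ x, f x ^ 2 ∂ν) ^ 2 -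
          γ / 4 * ∫ x, f x ^ 2 ∂ν) ≤ subsetRisk ν f r vhat := by
  set V := ∫ x, f x ^ 2 ∂ν
  set W := ∫ x, (if τ < f x then f x ^ 2 else 0) ∂ν
  set ε := (√(2 * n * V))⁻¹
  let h (x : P) : ℝ := if τ < f x then 0 else ε * f x
  have hV : 0 ≤ V := integral_nonneg fun x ↦ sq_nonneg _
  have hW : 0 ≤ W := integral_nonneg fun x ↦ by positivity
  have large : MeasurableSet {x | τ < f x} := measurableSet_lt measurable_const hf
  have abs_h_le (x : P) : |h x| ≤ 1 := by
    by_cases hx : τ < f x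
    · simp [h, hx]
    · simp only [h, hx, if_false]
      rw [abs_of_nonneg (mul_nonneg (by positivity) (hf0 x)), mul_comm]
      exact div_le_one_of_le₀ ((not_lt.1 hx).trans hτ) (Real.sqrt_nonneg _)
  have separation : ∫ x, f x * h x ∂ν = ε * (V - W) := by
    rw [← integral_ite_zero_left hf2 large, ← integral_const_mul]
    congr with x
    simp only [h, mul_ite, mul_zero]
    congr 1
    ring
  have information : ∫ x, h x ^ 2 ∂ν = ε ^ 2 * (V - W) := by
    rw [← integral_ite_zero_left hf2 large, ← integral_const_mul]
    congr with x
    simp [h, ite_pow, mul_pow]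
  have bound := ofReal_le_subsetRisk (n := n)
    (((memLp_two_iff_integrable_sq hf.aestronglyMeasurable).2 hf2).integrable one_le_two) hr hv
    (.ite large measurable_const (hf.const_mul ε)) abs_h_le
  rw [separation, information] at bound
  refine (ENNReal.ofReal_le_ofReal (sub_le_sub (div_mul_one_sub_div_sq_le hV hW n) ?_)).trans bound
  linarith [integral_singleton_mul_sq_le hf2 hatom]

end Tilt

lemma countablySeparated_of_injective {α β : Type*} [MeasurableSpace α] [MeasurableSpace β]
    [MeasurableSpace.CountablySeparated β] {f : α → β} (hf : Measurable f)
    (hinj : Function.Injective f) : MeasurableSpace.CountablySeparated α := by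
  obtain ⟨S, hS, hSm, hsep⟩ := exists_countable_separating β MeasurableSet Set.univ
  refine ⟨⟨Set.preimage f '' S, hS.image _, Set.forall_mem_image.2 fun s hs ↦ hf (hSm s hs),
    fun x _ y _ hxy ↦ hinj (hsep _ trivial _ trivial fun s hs ↦ ?_)⟩⟩
  exact hxy _ (Set.mem_image_of_mem _ hs)

lemma countablySeparated_prod {α β : Type*} [MeasurableSpace α] [MeasurableSpace β]
    [MeasurableSpace.CountablySeparated α] [MeasurableSpace.CountablySeparated β] :
    MeasurableSpace.CountablySeparated (α × β) := by
  obtain ⟨f, hf, hf_inj⟩ := MeasurableSpace.measurable_injection_nat_bool_of_countablySeparated α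
  obtain ⟨g, hg, hg_inj⟩ := MeasurableSpace.measurable_injection_nat_bool_of_countablySeparated β
  exact countablySeparated_of_injective
    ((hf.comp measurable_fst).prodMk (hg.comp measurable_snd)) (hf_inj.prodMap hg_inj)

lemma measurableSet_measure_singleton_le {P : Type*} [MeasurableSpace P]
    [MeasurableSingletonClass P] (ν : Measure P) [SFinite ν] (g : ℝ≥0∞) :
    MeasurableSet {p | ν {p} ≤ g} := by
  have atoms_countable : {p | 0 < ν {p}}.Countable :=
    Measure.countable_meas_pos_of_disjoint_iUnion (As := fun p : P ↦ {p})
      (fun p ↦ measurableSet_singleton p) fun p q hpq ↦ by simpa [Function.onFun] using hpq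
  have large_atoms_subset : {p | ν {p} ≤ g}ᶜ ⊆ {p | 0 < ν {p}} := fun p hp ↦ by
    simp only [Set.mem_compl_iff, Set.mem_ofPred_eq, not_le] at hp
    exact zero_le.trans_lt hp
  exact (atoms_countable.mono large_atoms_subset).measurableSet.of_compl

section Policy

variable {X A : Type*} [MeasurableSpace X] [Fintype A] (lam : Measure X) (μp πp : Policy X A)

lemma impW_nonneg (p : X × A) : 0 ≤ impW μp πp p := div_nonneg (πp.nonneg _ _) (μp.nonneg _ _)

lemma prob_mul_impW {μp πp : Policy X A} (habs : ∀ x a, 0 < πp.prob x a → 0 < μp.prob x a)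
    (x : X) (a : A) : μp.prob x a * impW μp πp (x, a) = πp.prob x a := by
  refine mul_div_cancel_of_imp' fun hμ ↦ ?_
  exact (πp.nonneg x a).antisymm' (not_lt.1 fun hπ ↦ (habs x a hπ).ne' hμ)

namespace Policy

lemma sum_prob_mul_nonneg {f : X × A → ℝ} (hf0 : ∀ p, 0 ≤ f p) (x : X) :
    0 ≤ ∑ a, μp.prob x a * f (x, a) :=
  Finset.sum_nonneg fun a _ ↦ mul_nonneg (μp.nonneg x a) (hf0 _)

variable [MeasurableSpace A]

lemma measurable_prob [MeasurableSingletonClass A] : Measurable fun p : X × A ↦ μp.prob p.1 p.2 :=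
  measurable_from_prod_countable_left μp.meas

lemma measurable_sum_smul_dirac : Measurable fun x ↦
    Measure.sum fun a : A ↦ ENNReal.ofReal (μp.prob x a) • Measure.dirac (x, a) := by
  refine Measure.measurable_of_measurable_coe _ fun s hs ↦ ?_
  simp only [Measure.sum_apply _ hs, Measure.smul_apply, smul_eq_mul, tsum_fintype]
  exact Finset.measurable_sum _ fun a _ ↦ (μp.meas a).ennreal_ofReal.mul
    ((Measure.measurable_coe hs).comp (Measure.measurable_dirac.comp measurable_prodMk_right))

lemma lintegral_joint {F : X × A → ℝ≥0∞} (hF : Measurable F) :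
    ∫⁻ p, F p ∂joint lam μp = ∫⁻ x, ∑ a, ENNReal.ofReal (μp.prob x a) * F (x, a) ∂lam := by
  rw [joint, Measure.lintegral_bind μp.measurable_sum_smul_dirac.aemeasurable hF.aemeasurable]
  simp [lintegral_smul_measure, lintegral_dirac' _ hF]

instance isProbabilityMeasure_joint [IsProbabilityMeasure lam] :
    IsProbabilityMeasure (joint lam μp) := by
  constructor
  rw [← lintegral_one, lintegral_joint lam μp measurable_const]
  simp [← ENNReal.ofReal_sum_of_nonneg fun a _ ↦ μp.nonneg _ a, μp.sum_one]

lemma lintegral_ofReal_joint {f : X × A → ℝ} (hf : Measurable f) (hf0 : ∀ p, 0 ≤ f p) :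
    ∫⁻ p, ENNReal.ofReal (f p) ∂joint lam μp =
      ∫⁻ x, ENNReal.ofReal (∑ a, μp.prob x a * f (x, a)) ∂lam := by
  rw [lintegral_joint lam μp hf.ennreal_ofReal]
  refine lintegral_congr fun x ↦ ?_
  rw [ENNReal.ofReal_sum_of_nonneg fun a _ ↦ mul_nonneg (μp.nonneg x a) (hf0 _)]
  simp_rw [ENNReal.ofReal_mul (μp.nonneg x _)]

lemma measurable_sum_prob_mul {f : X × A → ℝ} (hf : Measurable f) :
    Measurable fun x ↦ ∑ a, μp.prob x a * f (x, a) :=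
  Finset.measurable_sum _ fun a _ ↦ (μp.meas a).mul (hf.comp measurable_prodMk_right)

lemma integrable_joint_iff {f : X × A → ℝ} (hf : Measurable f) (hf0 : ∀ p, 0 ≤ f p) :
    Integrable f (joint lam μp) ↔ Integrable (fun x ↦ ∑ a, μp.prob x a * f (x, a)) lam := by
  rw [Integrable, Integrable, and_iff_right hf.aestronglyMeasurable,
    and_iff_right (μp.measurable_sum_prob_mul hf).aestronglyMeasurable,
    hasFiniteIntegral_iff_ofReal (.of_forall hf0),
    hasFiniteIntegral_iff_ofReal (.of_forall (μp.sum_prob_mul_nonneg hf0)),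
    lintegral_ofReal_joint lam μp hf hf0]

end Policy

lemma Emu_nonneg {f : X × A → ℝ} (hf0 : ∀ p, 0 ≤ f p) : 0 ≤ Emu lam μp f :=
  integral_nonneg (μp.sum_prob_mul_nonneg hf0)

variable [MeasurableSpace A]

lemma Emu_eq_integral_joint {f : X × A → ℝ} (hf : Measurable f) (hf0 : ∀ p, 0 ≤ f p) :
    Emu lam μp f = ∫ p, f p ∂Policy.joint lam μp := by
  rw [Emu, integral_eq_lintegral_of_nonneg_ae (.of_forall hf0) hf.aestronglyMeasurable,
    integral_eq_lintegral_of_nonneg_ae (.of_forall (μp.sum_prob_mul_nonneg hf0))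
      (μp.measurable_sum_prob_mul hf).aestronglyMeasurable,
    Policy.lintegral_ofReal_joint lam μp hf hf0]

lemma measurable_impW [MeasurableSingletonClass A] : Measurable (impW μp πp) :=
  πp.measurable_prob.div μp.measurable_prob

section Deterministic

variable {r : X × A → ℝ} (hr : Measurable r)

omit [Fintype A] in
lemma rstar_deterministic (p : X × A) : rstar (Kernel.deterministic r hr) p = r p := by
  rw [rstar, Kernel.deterministic_apply, integral_dirac]

lemma sampleMeasure_deterministic : sampleMeasure lam μp (Kernel.deterministic r hr) =
    (Policy.joint lam μp).map fun p ↦ (p, r p) := by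
  have graph_measurable : Measurable fun p : X × A ↦ (p, r p) := measurable_id.prodMk hr
  rw [sampleMeasure, ← Measure.bind_dirac_eq_map _ graph_measurable]
  congr 1 with p
  rw [Kernel.deterministic_apply, Measure.map_dirac' measurable_prodMk_left]

lemma vpi_deterministic [MeasurableSingletonClass A] {μp πp : Policy X A}
    (habs : ∀ x a, 0 < πp.prob x a → 0 < μp.prob x a) (hr0 : ∀ p, 0 ≤ r p) :
    vpi lam πp (Kernel.deterministic r hr) =
      ∫ p, impW μp πp p * r p ∂Policy.joint lam μp := by
  rw [← Emu_eq_integral_joint lam μp (f := fun p ↦ impW μp πp p * r p)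
    ((measurable_impW μp πp).mul hr) fun p ↦ mul_nonneg (impW_nonneg μp πp p) (hr0 p)]
  simp_rw [vpi, Emu, rstar_deterministic, ← mul_assoc, prob_mul_impW habs]

lemma inRewardClass_deterministic (σf : X × A → ℝ) {Rmax : X × A → ℝ} (hr0 : ∀ p, 0 ≤ r p)
    (hrR : ∀ p, r p ≤ Rmax p) : InRewardClass lam μp σf Rmax (Kernel.deterministic r hr) := by
  refine ⟨inferInstance, fun p ↦ ?_, .of_forall fun p ↦ ⟨?_, ?_, ?_⟩⟩
  · rw [Kernel.deterministic_apply]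
    exact integrable_dirac (by simp)
  · exact (hr0 p).trans_eq (rstar_deterministic hr p).symm
  · exact (rstar_deterministic hr p).trans_le (hrR p)
  · rw [Kernel.deterministic_apply, variance_dirac]
    exact sq_nonneg _

end Deterministic

lemma subsetRisk_le_iSup_inRewardClass [MeasurableSingletonClass A] [IsProbabilityMeasure lam]
    {μp πp : Policy X A} (habs : ∀ x a, 0 < πp.prob x a → 0 < μp.prob x a)
    (σf : X × A → ℝ) {r Rmax : X × A → ℝ} (hr : Measurable r) (hr0 : ∀ p, 0 ≤ r p)
    (hrR : ∀ p, r p ≤ Rmax p) {n : ℕ} {vhat : (Fin n → (X × A) × ℝ) → ℝ} (hv : Measurable vhat) :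
    subsetRisk (Policy.joint lam μp) (fun p ↦ impW μp πp p * r p) r vhat ≤
      ⨆ (D : Kernel (X × A) ℝ) (_ : InRewardClass lam μp σf Rmax D),
        ∫⁻ ω, ENNReal.ofReal ((vhat ω - vpi lam πp D) ^ 2)
          ∂(Measure.pi fun _ : Fin n ↦ sampleMeasure lam μp D) := by
  refine iSup₂_le fun B hB ↦ ?_
  have reward_measurable : Measurable (B.indicator r) := hr.indicator hB
  have reward_nonneg : ∀ p, 0 ≤ B.indicator r p := Set.indicator_nonneg fun p _ ↦ hr0 p
  have sample_measurable : Measurable fun p ↦ (p, B.indicator r p) :=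
    measurable_id.prodMk reward_measurable
  have samples_measurable : Measurable fun (p : Fin n → X × A) i ↦ (p i, B.indicator r (p i)) :=
    measurable_pi_lambda _ fun i ↦ sample_measurable.comp (measurable_pi_apply i)
  have := Measure.isProbabilityMeasure_map (μ := Policy.joint lam μp) sample_measurable.aemeasurable
  have value_eq : vpi lam πp (Kernel.deterministic (B.indicator r) reward_measurable) =
      ∫ p in B, impW μp πp p * r p ∂Policy.joint lam μp := by
    simp_rw [vpi_deterministic lam reward_measurable habs reward_nonneg,
      ← Set.indicator_mul_right, integral_indicator hB]
  refine le_iSup₂_of_le (Kernel.deterministic (B.indicator r) reward_measurable)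
    (inRewardClass_deterministic lam μp reward_measurable σf reward_nonneg fun p ↦
      (Set.indicator_le_self' (fun p _ ↦ hr0 p) p).trans (hrR p)) (le_of_eq ?_)
  rw [value_eq, sampleMeasure_deterministic,
    ← Measure.pi_map_pi fun _ ↦ sample_measurable.aemeasurable,
    lintegral_map ((hv.sub_const _).pow_const 2).ennreal_ofReal samples_measurable]
  rfl

theorem minimax_lower_bound_context_general [MeasurableSpace.CountablySeparated X]
    [MeasurableSingletonClass A] [IsProbabilityMeasure lam]
    (habs : ∀ x a, 0 < πp.prob x a → 0 < μp.prob x a)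
    (σf Rmax : X × A → ℝ) (hRm : Measurable Rmax) (hRnn : ∀ p, 0 ≤ Rmax p)
    (hfin : Integrable
      (fun x ↦ ∑ a, μp.prob x a * (impW μp πp (x, a) ^ 2 * Rmax (x, a) ^ 2)) lam)
    (γ : ℝ) (hγ : 0 ≤ γ) (ξ : X × A → ℝ)
    (hξ : ∀ p, ξ p = if Policy.joint lam μp {p} ≤ ENNReal.ofReal γ then 1 else 0) (n : ℕ) (τ : ℝ)
    (hτ : τ ≤ √(2 * n * Emu lam μp fun p ↦ ξ p * impW μp πp p ^ 2 * Rmax p ^ 2)) :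
    ENNReal.ofReal
      (Emu lam μp (fun p ↦ ξ p * impW μp πp p ^ 2 * Rmax p ^ 2) / (32 * n) *
        (1 - Emu lam μp (fun p ↦
              if τ < ξ p * impW μp πp p * Rmax p then ξ p * impW μp πp p ^ 2 * Rmax p ^ 2 else 0) /
            Emu lam μp (fun p ↦ ξ p * impW μp πp p ^ 2 * Rmax p ^ 2)) ^ 2 -
          γ / 4 * Emu lam μp fun p ↦ ξ p * impW μp πp p ^ 2 * Rmax p ^ 2) ≤
      minimaxRisk lam μp πp σf Rmax n := by
  have := countablySeparated_prod (α := X) (β := A)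
  have := MeasurableSpace.measurableSingletonClass_of_countablySeparated (α := X × A)
  let f (p : X × A) : ℝ := impW μp πp p * (ξ p * Rmax p)
  have ξ_measurable : Measurable ξ := by
    rw [funext hξ]
    exact .ite (measurableSet_measure_singleton_le _ _) measurable_const measurable_const
  have ξ_cases (p : X × A) : ξ p = 0 ∨ ξ p = 1 := by rw [hξ]; split_ifs <;> simp
  have ξ_mem (p : X × A) : ξ p ∈ Set.Icc 0 1 := by rcases ξ_cases p with h | h <;> simp [h]
  have reward_measurable : Measurable fun p ↦ ξ p * Rmax p := ξ_measurable.mul hRm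
  have reward_nonneg (p : X × A) : 0 ≤ ξ p * Rmax p := mul_nonneg (ξ_mem p).1 (hRnn p)
  have reward_le (p : X × A) : ξ p * Rmax p ≤ Rmax p :=
    mul_le_of_le_one_left (hRnn p) (ξ_mem p).2
  have f_measurable : Measurable f := (measurable_impW μp πp).mul reward_measurable
  have f_nonneg (p : X × A) : 0 ≤ f p := mul_nonneg (impW_nonneg μp πp p) (reward_nonneg p)
  have f_eq (p : X × A) : ξ p * impW μp πp p * Rmax p = f p := by simp only [f]; ring
  have f_sq (p : X × A) : ξ p * impW μp πp p ^ 2 * Rmax p ^ 2 = f p ^ 2 := by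
    rcases ξ_cases p with h | h <;> simp [f, h, mul_pow]
  have f_sq_integrable : Integrable (fun p ↦ f p ^ 2) (Policy.joint lam μp) := by
    refine ((Policy.integrable_joint_iff lam μp (f := fun p ↦ impW μp πp p ^ 2 * Rmax p ^ 2)
      (((measurable_impW μp πp).pow_const 2).mul (hRm.pow_const 2))
      fun p ↦ by positivity).2 hfin).mono'
      (f_measurable.pow_const 2).aestronglyMeasurable (.of_forall fun p ↦ ?_)
    rw [Real.norm_of_nonneg (sq_nonneg _), ← f_sq, mul_assoc]
    exact mul_le_of_le_one_left (by positivity) (ξ_mem p).2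
  have small_atoms (p : X × A) (hp : f p ≠ 0) : (Policy.joint lam μp).real {p} ≤ γ := by
    refine ENNReal.toReal_le_of_le_ofReal hγ (not_lt.1 fun h ↦ hp ?_)
    simp [f, hξ, h.not_ge]
  simp only [f_sq, f_eq] at hτ ⊢
  rw [Emu_eq_integral_joint lam μp (f_measurable.pow_const 2) fun p ↦ sq_nonneg _] at hτ ⊢
  rw [Emu_eq_integral_joint lam μp (.ite (measurableSet_lt measurable_const f_measurable)
    (f_measurable.pow_const 2) measurable_const) fun p ↦ by positivity]
  exact le_iInf₂ fun vhat hv ↦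
    (ofReal_le_subsetRisk_of_threshold f_measurable f_nonneg f_sq_integrable small_atoms
      reward_measurable hv hτ).trans
    (subsetRisk_le_iSup_inRewardClass lam habs σf reward_measurable reward_nonneg reward_le hv)

end Policy

lemma one_le_log_five_div {g : ℝ} (hg : g ∈ Set.Ioc 0 1) : 1 ≤ Real.log (5 / g) := by
  have five_le : 5 ≤ 5 / g := le_div_self (by norm_num) hg.1 hg.2
  rw [Real.le_log_iff_exp_le (by linarith)]
  linarith [Real.exp_one_lt_d9]

lemma relaxed_bound_le {V : ℝ} (hV : 0 ≤ V) (t : ℝ) (n : ℕ) {γ δ : ℝ} (hγ : γ ∈ Set.Icc 0 1)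
    (hδ : δ ∈ Set.Ioc 0 1) :
    V / (32 * Real.exp 1 * n) * t ^ 2 - max γ δ * Real.log (5 / max γ δ) * (1 + δ) * V ≤
      V / (32 * n) * t ^ 2 - γ / 4 * V := by
  have max_mem : max γ δ ∈ Set.Ioc 0 1 := ⟨lt_max_of_lt_right hδ.1, max_le hγ.2 hδ.2⟩
  have leading : V / (32 * Real.exp 1 * n) ≤ V / (32 * n) := by
    rw [mul_right_comm, ← div_div]
    exact div_le_self (by positivity) (Real.one_le_exp zero_le_one)
  have penalty : γ / 4 ≤ max γ δ * Real.log (5 / max γ δ) * (1 + δ) :=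
    calc γ / 4 ≤ max γ δ := (div_le_self hγ.1 (by norm_num)).trans (le_max_left _ _)
      _ ≤ max γ δ * Real.log (5 / max γ δ) :=
        le_mul_of_one_le_right max_mem.1.le (one_le_log_five_div max_mem)
      _ ≤ max γ δ * Real.log (5 / max γ δ) * (1 + δ) :=
        le_mul_of_one_le_right (mul_nonneg max_mem.1.le
          (zero_le_one.trans (one_le_log_five_div max_mem))) (by linarith [hδ.1])
  gcongr

/-- Theorem 4: lower bound via context richness. -/
theorem minimax_lower_bound_context
    [StandardBorelSpace X]
    (lam : Measure X) [IsProbabilityMeasure lam] (μp πp : Policy X A)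
    (habs : ∀ x a, 0 < πp.prob x a → 0 < μp.prob x a)
    (σf Rmax : X × A → ℝ) (hσm : Measurable σf) (hRm : Measurable Rmax)
    (hσnn : ∀ p, 0 ≤ σf p) (hRnn : ∀ p, 0 ≤ Rmax p)
    (hfin : Integrable
      (fun x => ∑ a, μp.prob x a * (impW μp πp (x, a) ^ 2 * Rmax (x, a) ^ 2)) lam)
    (γ : ℝ) (hγ : γ ∈ Set.Icc (0 : ℝ) 1) (δ : ℝ) (hδ : δ ∈ Set.Ioc (0 : ℝ) 1)
    (ξ : X × A → ℝ)
    (hξ : ∀ p, ξ p = if Policy.joint lam μp {p} ≤ ENNReal.ofReal γ then 1 else 0)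
    (γ' : ℝ) (hγ' : γ' = max γ δ) (n : ℕ) :
    ∃ Rhat rhohat : X × A → ℝ, Measurable Rhat ∧ Measurable rhohat ∧
      (∀ p, 0 ≤ Rhat p) ∧ (∀ p, 0 ≤ rhohat p) ∧
      (∀ p, Rhat p ^ 2 ≤ Rmax p ^ 2 ∧ Rmax p ^ 2 ≤ (1 + δ) * Rhat p ^ 2) ∧
      (∀ p, rhohat p ^ 2 ≤ impW μp πp p ^ 2 ∧ impW μp πp p ^ 2 ≤ (1 + δ) * rhohat p ^ 2) ∧
      ENNReal.ofReal
        (Emu lam μp (fun p => ξ p * rhohat p ^ 2 * Rhat p ^ 2) / (32 * Real.exp 1 * n) *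
          (1 - (Emu lam μp fun p =>
              if Real.sqrt (n * Emu lam μp (fun q => ξ q * rhohat q ^ 2 * Rhat q ^ 2) / 16)
                  < ξ p * rhohat p * Rhat p
              then ξ p * rhohat p ^ 2 * Rhat p ^ 2 else 0)
            / Emu lam μp (fun p => ξ p * rhohat p ^ 2 * Rhat p ^ 2)) ^ 2
          - γ' * Real.log (5 / γ') * (1 + δ)
            * Emu lam μp (fun p => ξ p * rhohat p ^ 2 * Rhat p ^ 2))
        ≤ minimaxRisk lam μp πp σf Rmax n := by
  have hV : 0 ≤ Emu lam μp fun p ↦ ξ p * impW μp πp p ^ 2 * Rmax p ^ 2 :=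
    Emu_nonneg lam μp fun p ↦ by rw [hξ]; positivity
  have le_mul_one_add (t : ℝ) : t ^ 2 ≤ (1 + δ) * t ^ 2 :=
    le_mul_of_one_le_left (sq_nonneg t) (by linarith [hδ.1])
  subst hγ'
  exact ⟨Rmax, impW μp πp, hRm, measurable_impW μp πp, hRnn, impW_nonneg μp πp,
    fun p ↦ ⟨le_rfl, le_mul_one_add _⟩, fun p ↦ ⟨le_rfl, le_mul_one_add _⟩,
    (ENNReal.ofReal_le_ofReal (relaxed_bound_le hV _ n hγ hδ)).trans
      (minimax_lower_bound_context_general lam μp πp habs σf Rmax hRm hRnn hfin γ hγ.1 ξ hξ n _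
        (Real.sqrt_le_sqrt (by linarith [mul_nonneg n.cast_nonneg hV])))⟩
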